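/- Let Ω ⊂ ℝⁿ be open with finite Lebesgue measure and let u ∈ H¹₀(Ω) ∩ C(Ω). If ω is a connected component of {x ∈ Ω : u(x) ≠ 0}, then the restriction u|_ω belongs to H¹₀(ω). -/

import Mathlib

open MeasureTheory Filter

/-- `u` belongs to `H¹₀(Ω)`: there is a sequence of `C¹` functions compactly supported in `Ω`
converging to `u` in `L²` and Cauchy in the `H¹` (gradient `L²`) seminorm. -/
def MemH10 {n : ℕ} (Ω : Set (EuclideanSpace ℝ (Fin n)))
    (u : EuclideanSpace ℝ (Fin n) → ℝ) : Prop :=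
  ∃ φ : ℕ → EuclideanSpace ℝ (Fin n) → ℝ,
    (∀ m, ContDiff ℝ 1 (φ m) ∧ HasCompactSupport (φ m) ∧ tsupport (φ m) ⊆ Ω) ∧
    Tendsto (fun m => eLpNorm (u - φ m) 2 volume) atTop (nhds 0) ∧
    ∀ ε : ℝ, 0 < ε → ∃ N, ∀ m l, N ≤ m → N ≤ l →
      eLpNorm (fun x => fderiv ℝ (φ m) x - fderiv ℝ (φ l) x) 2 volume < ENNReal.ofReal ε

/-!
Minimising over nested convex sets in the Hilbert space of `L²` gradients shows that a function
belongs to `H¹₀(ω)` as soon as it is an `L²` limit of test functions on `ω` whose gradients are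
merely bounded in `L²`.

Such approximations of `u · 1_ω` are obtained from two test functions `f`, `φ` on `Ω` close to `u`.
On `ω`, truncate by `φ` at a small level `ε`. Since `u` vanishes on `Ω ∩ ∂ω`, the truncation of `u`
lives in a compact subset of `ω`, on which a cutoff `θ` supported in `ω` equals `1`; the
approximation is `θ` times the truncation of `f`. Wherever `∇θ ≠ 0` the truncation of `u` vanishes,
so that of `f` is bounded by a multiple of `|u - f|`. As `θ` depends on `φ` and `ε` only, choosing
`f` last makes the term containing `∇θ` small.
-/

section Truncation

/-- A `C¹` regularisation of the positive part: it vanishes on `(-∞, 0]` and lies between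
`max t 0 - ε` and `max t 0`. -/
noncomputable def softPosPart (ε t : ℝ) : ℝ := √(ε ^ 2 + max t 0 ^ 2) - ε

theorem hasDerivAt_max_zero_sq (t : ℝ) : HasDerivAt (fun s : ℝ => max s 0 ^ 2) (2 * max t 0) t := by
  have of_ne : ∀ s : ℝ, s ≠ 0 → HasDerivAt (fun s : ℝ => max s 0 ^ 2) (2 * max s 0) s := by
    intro s hs
    rcases hs.lt_or_gt with hneg | hpos
    · rw [max_eq_right hneg.le, mul_zero]
      refine (hasDerivAt_const s (0 : ℝ)).congr_of_eventuallyEq ?_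
      filter_upwards [Iio_mem_nhds hneg] with r hr
      rw [max_eq_right (Set.mem_Iio.1 hr).le, zero_pow two_ne_zero]
    · rw [max_eq_left hpos.le]
      have hsq : HasDerivAt (fun r : ℝ => r ^ 2) (2 * s) s := by simpa using hasDerivAt_pow 2 s
      refine hsq.congr_of_eventuallyEq ?_
      filter_upwards [Ioi_mem_nhds hpos] with r hr
      rw [max_eq_left (Set.mem_Ioi.1 hr).le]
  exact hasDerivAt_of_hasDerivAt_of_ne' (g := fun s => 2 * max s 0) of_ne (by fun_prop)
    (by fun_prop) t

theorem contDiff_max_zero_sq : ContDiff ℝ 1 fun s : ℝ => max s 0 ^ 2 := by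
  refine contDiff_one_iff_deriv.2
    ⟨fun t => (hasDerivAt_max_zero_sq t).differentiableAt, ?_⟩
  rw [funext fun t => (hasDerivAt_max_zero_sq t).deriv]
  fun_prop

variable {ε : ℝ}

theorem contDiff_softPosPart (hε : 0 < ε) : ContDiff ℝ 1 (softPosPart ε) :=
  ((contDiff_const.add contDiff_max_zero_sq).sqrt fun _ => by positivity).sub contDiff_const

theorem softPosPart_of_nonpos (hε : 0 ≤ ε) {t : ℝ} (ht : t ≤ 0) : softPosPart ε t = 0 := by
  simp [softPosPart, max_eq_right ht, Real.sqrt_sq hε]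

theorem max_sub_le_softPosPart (ε t : ℝ) : max t 0 - ε ≤ softPosPart ε t :=
  sub_le_sub_right (Real.le_sqrt_of_sq_le <| le_add_of_nonneg_left <| sq_nonneg ε) ε

theorem lipschitzWith_softPosPart (ε : ℝ) : LipschitzWith 1 (softPosPart ε) := by
  refine LipschitzWith.of_le_add fun s t => ?_
  have hmax : |max s 0 - max t 0| ≤ |s - t| := abs_max_sub_max_le_abs s t 0
  have hsqrt : max t 0 ≤ √(ε ^ 2 + max t 0 ^ 2) := Real.le_sqrt_of_sq_le (by nlinarith)
  have htriangle : √(ε ^ 2 + max s 0 ^ 2) ≤ √(ε ^ 2 + max t 0 ^ 2) + |s - t| := by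
    refine Real.sqrt_le_iff.2 ⟨by positivity, ?_⟩
    have hsq : √(ε ^ 2 + max t 0 ^ 2) ^ 2 = ε ^ 2 + max t 0 ^ 2 := Real.sq_sqrt (by positivity)
    have hle : max s 0 ≤ max t 0 + |s - t| := by linarith [le_abs_self (max s 0 - max t 0)]
    nlinarith [le_max_right s 0, le_max_right t 0, abs_nonneg (s - t)]
  rw [Real.dist_eq]
  unfold softPosPart
  linarith

theorem softPosPart_le_max (hε : 0 ≤ ε) (t : ℝ) : softPosPart ε t ≤ max t 0 := by
  have hmax : 0 ≤ max t 0 := le_max_right t 0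
  rw [softPosPart, sub_le_iff_le_add]
  exact Real.sqrt_le_iff.2 ⟨by positivity, by nlinarith⟩

/-- A `C¹` regularisation of `max (min a b - ε) 0`. As `a - softPosPart ε (a - b)` may exceed
`min a b` by `ε`, it takes the shift by `2 * ε` to make it vanish as soon as `min a b ≤ ε`. -/
noncomputable def truncMin (ε a b : ℝ) : ℝ :=
  softPosPart ε (a - softPosPart ε (a - b) - 2 * ε)

theorem truncMin_of_min_le (hε : 0 ≤ ε) {a b : ℝ} (h : min a b ≤ ε) : truncMin ε a b = 0 := by
  refine softPosPart_of_nonpos hε ?_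
  have := max_sub_le_softPosPart ε (a - b)
  rcases min_le_iff.1 h with ha | hb
  · linarith [le_max_right (a - b) 0]
  · linarith [le_max_left (a - b) 0]

theorem truncMin_le_max (hε : 0 ≤ ε) (a b : ℝ) : truncMin ε a b ≤ max a 0 := by
  refine (softPosPart_le_max hε _).trans (max_le_max_right 0 ?_)
  linarith [max_sub_le_softPosPart ε (a - b), le_max_right (a - b) 0]

theorem min_sub_le_truncMin (hε : 0 ≤ ε) (a b : ℝ) : min a b - 3 * ε ≤ truncMin ε a b := by
  have hinner : a - softPosPart ε (a - b) ≥ min a b := by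
    have : a - max (a - b) 0 = min a b := by simp [← min_sub_sub_left, min_comm]
    linarith [softPosPart_le_max hε (a - b)]
  have houter := max_sub_le_softPosPart ε (a - softPosPart ε (a - b) - 2 * ε)
  rw [truncMin]
  linarith [le_max_left (a - softPosPart ε (a - b) - 2 * ε) 0]

theorem abs_truncMin_sub_le (ε a a' b : ℝ) : |truncMin ε a b - truncMin ε a' b| ≤ 2 * |a - a'| := by
  have hp : ∀ s t, |softPosPart ε s - softPosPart ε t| ≤ |s - t| := by
    simpa [Real.dist_eq] using (lipschitzWith_softPosPart ε).dist_le_mul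
  have hinner := hp (a - b) (a' - b)
  rw [sub_sub_sub_cancel_right] at hinner
  calc |truncMin ε a b - truncMin ε a' b|
      ≤ |(a - a') - (softPosPart ε (a - b) - softPosPart ε (a' - b))| := by
        refine (hp _ _).trans_eq ?_
        congr 1
        ring
    _ ≤ |a - a'| + |softPosPart ε (a - b) - softPosPart ε (a' - b)| := abs_sub _ _
    _ ≤ 2 * |a - a'| := by linarith

/-- A `C¹` truncation of `a` by `b`, odd in `(a, b)`: for `a, b ≥ 0` it regularises
`max (min a b - ε) 0`, and it vanishes as soon as `|a| ≤ ε` or `|b| ≤ ε`. -/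
noncomputable def oddTruncMin (ε a b : ℝ) : ℝ := truncMin ε a b - truncMin ε (-a) (-b)

theorem oddTruncMin_neg (ε a b : ℝ) : oddTruncMin ε (-a) (-b) = -oddTruncMin ε a b := by
  simp [oddTruncMin]

theorem oddTruncMin_of_min_le (hε : 0 ≤ ε) {a b : ℝ} (h : min |a| |b| ≤ ε) :
    oddTruncMin ε a b = 0 := by
  have hpos : min a b ≤ ε := (min_le_min (le_abs_self a) (le_abs_self b)).trans h
  have hneg : min (-a) (-b) ≤ ε := (min_le_min (neg_le_abs a) (neg_le_abs b)).trans h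
  rw [oddTruncMin, truncMin_of_min_le hε hpos, truncMin_of_min_le hε hneg, sub_zero]

theorem abs_sub_oddTruncMin_le (hε : 0 ≤ ε) (a b : ℝ) :
    |a - oddTruncMin ε a b| ≤ |a - b| + 3 * ε := by
  wlog ha : 0 ≤ a generalizing a b
  · simpa [oddTruncMin_neg, neg_add_eq_sub, abs_sub_comm] using this (-a) (-b) (by linarith)
  rw [oddTruncMin, truncMin_of_min_le hε (a := -a) (min_le_of_left_le (by linarith)), sub_zero,
    abs_of_nonneg]
  · have hmin : a - |a - b| ≤ min a b :=
      le_min (by linarith [abs_nonneg (a - b)]) (by linarith [le_abs_self (a - b)])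
    linarith [min_sub_le_truncMin hε a b]
  · linarith [truncMin_le_max hε a b, max_eq_left ha]

theorem abs_oddTruncMin_sub_le (ε a a' b : ℝ) :
    |oddTruncMin ε a b - oddTruncMin ε a' b| ≤ 4 * |a - a'| := by
  have hneg := abs_truncMin_sub_le ε (-a) (-a') (-b)
  rw [neg_sub_neg, abs_sub_comm a'] at hneg
  rw [oddTruncMin, oddTruncMin, sub_sub_sub_comm]
  refine (abs_sub _ _).trans ?_
  linarith [abs_truncMin_sub_le ε a a' b]

variable {E : Type*} [NormedAddCommGroup E] [NormedSpace ℝ E] {f g : E → ℝ}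

theorem norm_fderiv_comp_le_of_lipschitzWith {p : ℝ → ℝ} {C : NNReal} (hp : LipschitzWith C p)
    {x : E} (hpf : DifferentiableAt ℝ p (f x)) (hf : DifferentiableAt ℝ f x) :
    ‖fderiv ℝ (fun y => p (f y)) x‖ ≤ C * ‖fderiv ℝ f x‖ := by
  rw [show (fun y => p (f y)) = p ∘ f from rfl, fderiv_comp x hpf hf]
  refine (ContinuousLinearMap.opNorm_comp_le _ _).trans ?_
  gcongr
  exact norm_fderiv_le_of_lipschitz ℝ hp

theorem contDiff_truncMin (hε : 0 < ε) (hf : ContDiff ℝ 1 f) (hg : ContDiff ℝ 1 g) :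
    ContDiff ℝ 1 fun x => truncMin ε (f x) (g x) := by
  have hp := contDiff_softPosPart hε
  exact hp.comp ((hf.sub (hp.comp (hf.sub hg))).sub contDiff_const)

theorem contDiff_oddTruncMin (hε : 0 < ε) (hf : ContDiff ℝ 1 f) (hg : ContDiff ℝ 1 g) :
    ContDiff ℝ 1 fun x => oddTruncMin ε (f x) (g x) :=
  (contDiff_truncMin hε hf hg).sub (contDiff_truncMin hε hf.neg hg.neg)

theorem norm_fderiv_truncMin_le (hε : 0 < ε) {x : E} (hf : DifferentiableAt ℝ f x)
    (hg : DifferentiableAt ℝ g x) :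
    ‖fderiv ℝ (fun y => truncMin ε (f y) (g y)) x‖ ≤ 2 * ‖fderiv ℝ f x‖ + ‖fderiv ℝ g x‖ := by
  have hp : Differentiable ℝ (softPosPart ε) := (contDiff_softPosPart hε).differentiable one_ne_zero
  have hcomp : ∀ {h : E → ℝ}, DifferentiableAt ℝ h x →
      ‖fderiv ℝ (fun y => softPosPart ε (h y)) x‖ ≤ ‖fderiv ℝ h x‖ := fun hh => by
    simpa using norm_fderiv_comp_le_of_lipschitzWith (lipschitzWith_softPosPart ε) (hp _) hh
  have hfg : DifferentiableAt ℝ (fun y => softPosPart ε (f y - g y)) x :=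
    (hp _).comp x (hf.sub hg)
  calc ‖fderiv ℝ (fun y => truncMin ε (f y) (g y)) x‖
      ≤ ‖fderiv ℝ (fun y => f y - softPosPart ε (f y - g y) - 2 * ε) x‖ :=
        hcomp ((hf.sub hfg).sub_const _)
    _ = ‖fderiv ℝ f x - fderiv ℝ (fun y => softPosPart ε (f y - g y)) x‖ := by
        rw [fderiv_sub_const, fderiv_fun_sub hf hfg]
    _ ≤ ‖fderiv ℝ f x‖ + ‖fderiv ℝ (fun y => f y - g y) x‖ :=
        (norm_sub_le _ _).trans (by gcongr; exact hcomp (hf.sub hg))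
    _ ≤ ‖fderiv ℝ f x‖ + (‖fderiv ℝ f x‖ + ‖fderiv ℝ g x‖) := by
        rw [fderiv_fun_sub hf hg]
        gcongr
        exact norm_sub_le _ _
    _ = 2 * ‖fderiv ℝ f x‖ + ‖fderiv ℝ g x‖ := by ring

theorem norm_fderiv_oddTruncMin_le (hε : 0 < ε) {x : E} (hf : DifferentiableAt ℝ f x)
    (hg : DifferentiableAt ℝ g x) :
    ‖fderiv ℝ (fun y => oddTruncMin ε (f y) (g y)) x‖ ≤
      4 * ‖fderiv ℝ f x‖ + 2 * ‖fderiv ℝ g x‖ := by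
  have hdiff : ∀ {h k : E → ℝ}, DifferentiableAt ℝ h x → DifferentiableAt ℝ k x →
      DifferentiableAt ℝ (fun y => truncMin ε (h y) (k y)) x := fun hh hk => by
    have hp := (contDiff_softPosPart hε).differentiable one_ne_zero
    exact (hp _).comp x ((hh.sub ((hp _).comp x (hh.sub hk))).sub_const _)
  have hpos := norm_fderiv_truncMin_le hε hf hg
  have hneg := norm_fderiv_truncMin_le hε hf.neg hg.neg
  simp only [fderiv_neg, norm_neg] at hneg
  refine (congrArg norm (fderiv_fun_sub (hdiff hf hg) (hdiff hf.neg hg.neg))).trans_le ?_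
  refine (norm_sub_le _ _).trans ?_
  linarith

end Truncation

theorem exists_cauchySeq_mem_of_antitone_convex {H : Type*} [SeminormedAddCommGroup H]
    [InnerProductSpace ℝ H] {A : ℕ → Set H} (hA : Antitone A) (hconv : ∀ k, Convex ℝ (A k))
    {C : ℝ} (hC : ∀ k, ∃ a ∈ A k, ‖a‖ ≤ C) : ∃ d : ℕ → H, (∀ k, d k ∈ A k) ∧ CauchySeq d := by
  -- `m` converges, so by the parallelogram law near-minimisers of the norm form a Cauchy sequence.
  set m : ℕ → ℝ := fun k => Metric.infDist 0 (A k)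
  have hm_le : ∀ k, ∀ a ∈ A k, m k ≤ ‖a‖ := fun k a ha => by
    simpa using Metric.infDist_le_dist_of_mem (x := 0) ha
  have hne : ∀ k, (A k).Nonempty := fun k => (hC k).imp fun _ h => h.1
  have hmono : Monotone m := fun k l hkl =>
    Metric.infDist_le_infDist_of_subset (hA hkl) (hne l)
  have hbdd : BddAbove (Set.range m) := by
    refine ⟨C, Set.forall_mem_range.2 fun k => ?_⟩
    obtain ⟨a, ha, haC⟩ := hC k
    exact (hm_le k a ha).trans haC
  have hmlim : Tendsto m atTop (nhds (⨆ k, m k)) := tendsto_atTop_ciSup hmono hbdd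
  set L := ⨆ k, m k
  have hnear : ∀ k : ℕ, ∃ a ∈ A k, ‖a‖ < m k + 1 / ((k : ℝ) + 1) := fun k => by
    simpa using (Metric.infDist_lt_iff (hne k)).1 (lt_add_of_pos_right (m k) Nat.one_div_pos_of_nat)
  choose d hdA hd using hnear
  have hdlim : Tendsto (fun k => ‖d k‖) atTop (nhds L) := by
    refine tendsto_of_tendsto_of_tendsto_of_le_of_le hmlim ?_ (fun k => hm_le k _ (hdA k))
      fun k => (hd k).le
    simpa using hmlim.add tendsto_one_div_add_atTop_nhds_zero_nat
  refine ⟨d, hdA, Metric.cauchySeq_iff.2 fun ε hε => ?_⟩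
  have hη : 0 < ε ^ 2 / 8 := by positivity
  obtain ⟨N, hN⟩ := eventually_atTop.1 <|
    ((hmlim.pow 2).eventually_const_lt (sub_lt_self (L ^ 2) hη)).and
      ((hdlim.pow 2).eventually_lt_const (lt_add_of_pos_right (L ^ 2) hη))
  refine ⟨N, fun k hk l hl => ?_⟩
  have hmid : m N ≤ ‖d k + d l‖ / 2 := by
    refine (hm_le N _ ((hconv N).midpoint_mem (hA hk (hdA k)) (hA hl (hdA l)))).trans_eq ?_
    rw [midpoint_eq_smul_add, norm_smul]
    norm_num
    ring
  have hmid_sq : m N ^ 2 ≤ (‖d k + d l‖ / 2) ^ 2 := pow_le_pow_left₀ Metric.infDist_nonneg hmid 2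
  rw [dist_eq_norm]
  refine lt_of_pow_lt_pow_left₀ 2 hε.le ?_
  linarith [parallelogram_law_with_norm ℝ (d k) (d l), (hN N le_rfl).1, (hN k hk).2, (hN l hl).2]

theorem disjoint_frontier_connectedComponentIn {X : Type*} [TopologicalSpace X]
    [LocallyConnectedSpace X] {U : Set X} (hU : IsOpen U) (x : X) :
    Disjoint (frontier (connectedComponentIn U x)) U := by
  refine Set.disjoint_left.2 fun y hy hyU => ?_
  rw [hU.connectedComponentIn.frontier_eq] at hy
  obtain ⟨z, hzy, hzx⟩ := mem_closure_iff.1 hy.1 _ hU.connectedComponentIn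
    (mem_connectedComponentIn hyU)
  apply hy.2
  rw [connectedComponentIn_eq hzx, ← connectedComponentIn_eq hzy]
  exact mem_connectedComponentIn hyU

section BoundedApproximation

open TopologicalSpace
open scoped Distributions ENNReal NNReal

theorem differentiable_testFunction {E : Type*} [NormedAddCommGroup E] [NormedSpace ℝ E]
    {Ω : Opens E} (φ : 𝓓^{1}(Ω, ℝ)) : Differentiable ℝ φ :=
  φ.contDiff.differentiable one_ne_zero

variable {E : Type*} [NormedAddCommGroup E] [MeasurableSpace E] [BorelSpace E] {μ : Measure E}

theorem convex_setOf_eLpNorm_sub_testFunction_le [NormedSpace ℝ E] {Ω : Opens E} {n : ℕ∞}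
    {F : Type*} [NormedAddCommGroup F] [NormedSpace ℝ F] {v : E → F}
    (hv : AEStronglyMeasurable v μ) {p : ℝ≥0∞} (hp : 1 ≤ p) (r : ℝ≥0∞) :
    Convex ℝ {φ : 𝓓^{n}(Ω, F) | eLpNorm (v - ⇑φ) p μ ≤ r} := by
  intro φ hφ ψ hψ a b ha hb hab
  have hsplit : v - ⇑(a • φ + b • ψ) = a • (v - ⇑φ) + b • (v - ⇑ψ) := by
    ext x
    simp only [Pi.sub_apply, Pi.add_apply, Pi.smul_apply, FunLike.coe_add, FunLike.coe_smul]
    linear_combination (norm := module) -(hab • v x)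
  calc eLpNorm (v - ⇑(a • φ + b • ψ)) p μ
      ≤ eLpNorm (a • (v - ⇑φ)) p μ + eLpNorm (b • (v - ⇑ψ)) p μ := by
        rw [hsplit]
        exact eLpNorm_add_le ((hv.sub φ.aestronglyMeasurable).const_smul a)
          ((hv.sub ψ.aestronglyMeasurable).const_smul b) hp
    _ ≤ ENNReal.ofReal a * r + ENNReal.ofReal b * r := by
        rw [eLpNorm_const_smul, eLpNorm_const_smul, Real.enorm_of_nonneg ha,
          Real.enorm_of_nonneg hb]
        gcongr
        exacts [hφ, hψ]
    _ = r := by rw [← add_mul, ← ENNReal.ofReal_add ha hb, hab, ENNReal.ofReal_one, one_mul]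

variable [InnerProductSpace ℝ E] [CompleteSpace E] [IsFiniteMeasureOnCompacts μ] {Ω : Opens E}

theorem memLp_gradient_testFunction (φ : 𝓓^{1}(Ω, ℝ)) : MemLp (gradient φ) 2 μ := by
  have hcont : Continuous (gradient φ) :=
    (InnerProductSpace.toDual ℝ E).symm.continuous.comp (φ.contDiff.continuous_fderiv one_ne_zero)
  have hsupp : HasCompactSupport (gradient φ) :=
    (φ.hasCompactSupport.fderiv ℝ).comp_left (map_zero (InnerProductSpace.toDual ℝ E).symm)
  exact hcont.memLp_of_hasCompactSupport hsupp

/-- The gradient as a map from `C¹` test functions to `L²`. Vectors are used in place of the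
derivatives themselves so that the target is a Hilbert space. -/
noncomputable def gradLp (μ : Measure E) [IsFiniteMeasureOnCompacts μ] :
    𝓓^{1}(Ω, ℝ) →ₗ[ℝ] Lp E 2 μ where
  toFun φ := (memLp_gradient_testFunction φ).toLp
  map_add' φ ψ := by
    rw [← MemLp.toLp_add]
    congr 1
    ext1 x
    simp [gradient, fderiv_add (differentiable_testFunction φ x)
      (differentiable_testFunction ψ x)]
  map_smul' c φ := by
    rw [RingHom.id_apply, ← MemLp.toLp_const_smul]
    congr 1
    ext1 x
    simp [gradient, fderiv_const_smul (differentiable_testFunction φ x)]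

theorem enorm_gradLp (φ : 𝓓^{1}(Ω, ℝ)) : ‖gradLp μ φ‖ₑ = eLpNorm (fderiv ℝ φ) 2 μ := by
  refine (Lp.enorm_toLp (hf := memLp_gradient_testFunction φ)).trans
    (eLpNorm_congr_norm_ae (.of_forall fun x => ?_))
  exact LinearIsometryEquiv.norm_map _ _

theorem edist_gradLp (φ ψ : 𝓓^{1}(Ω, ℝ)) :
    edist (gradLp μ φ) (gradLp μ ψ) = eLpNorm (fun x => fderiv ℝ φ x - fderiv ℝ ψ x) 2 μ := by
  rw [edist_eq_enorm_sub, ← map_sub, enorm_gradLp]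
  congr 1
  ext1 x
  exact fderiv_sub (differentiable_testFunction φ x)
    (differentiable_testFunction ψ x)

theorem MemH10.exists_bounded_approx {n : ℕ} {Ω : Opens (EuclideanSpace ℝ (Fin n))}
    {u : EuclideanSpace ℝ (Fin n) → ℝ} (hu : MemH10 Ω u) :
    ∃ A : ℝ≥0, ∀ δ : ℝ≥0∞, δ ≠ 0 → ∃ φ : 𝓓^{1}(Ω, ℝ),
      eLpNorm (u - ⇑φ) 2 volume ≤ δ ∧ eLpNorm (fderiv ℝ φ) 2 volume ≤ A := by
  obtain ⟨f, hf, hlim, hcauchy⟩ := hu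
  let φ (m : ℕ) : 𝓓^{1}(Ω, ℝ) := ⟨f m, (hf m).1, (hf m).2.1, (hf m).2.2⟩
  obtain ⟨N, hN⟩ := hcauchy 1 one_pos
  refine ⟨‖gradLp volume (φ N)‖₊ + 1, fun δ hδ => ?_⟩
  obtain ⟨m, hNm, hm⟩ := ((eventually_ge_atTop N).and (hlim.eventually_le_const hδ.pos)).exists
  refine ⟨φ m, hm, ?_⟩
  have hdist : edist (gradLp volume (φ m)) (gradLp volume (φ N)) ≤ 1 :=
    (edist_gradLp (φ m) (φ N)).trans_le <| (hN m N hNm le_rfl).le.trans_eq ENNReal.ofReal_one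
  calc eLpNorm (fderiv ℝ (φ m)) 2 volume
      = ‖gradLp volume (φ N) + (gradLp volume (φ m) - gradLp volume (φ N))‖ₑ := by
        rw [add_sub_cancel, enorm_gradLp]
    _ ≤ ‖gradLp volume (φ N)‖ₑ + 1 := by
        grw [enorm_add_le, ← edist_eq_enorm_sub, hdist]
    _ = _ := by simp [enorm_eq_nnnorm]

theorem memH10_of_bounded_approx {n : ℕ} {Ω : Opens (EuclideanSpace ℝ (Fin n))}
    {v : EuclideanSpace ℝ (Fin n) → ℝ} (hv : AEStronglyMeasurable v volume) {A : ℝ≥0}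
    (happrox : ∀ δ : ℝ≥0∞, δ ≠ 0 → ∃ φ : 𝓓^{1}(Ω, ℝ),
      eLpNorm (v - ⇑φ) 2 volume ≤ δ ∧ eLpNorm (fderiv ℝ φ) 2 volume ≤ A) :
    MemH10 Ω v := by
  let B (k : ℕ) : Set 𝓓^{1}(Ω, ℝ) := {φ | eLpNorm (v - ⇑φ) 2 volume ≤ ((k : ℝ≥0∞) + 1)⁻¹}
  have hB : Antitone B := fun k l hkl φ hφ =>
    le_trans (b := ((l : ℝ≥0∞) + 1)⁻¹) hφ (by gcongr)
  obtain ⟨d, hdB, hd⟩ := exists_cauchySeq_mem_of_antitone_convex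
    (A := fun k => gradLp volume '' B k) (fun k l hkl => Set.image_mono (hB hkl))
    (fun k => (convex_setOf_eLpNorm_sub_testFunction_le hv one_le_two _).linear_image _) (C := A)
    fun k => by
      obtain ⟨φ, hφ, hφA⟩ := happrox ((k : ℝ≥0∞) + 1)⁻¹ (by simp)
      refine ⟨_, Set.mem_image_of_mem _ hφ, ?_⟩
      rw [← enorm_gradLp] at hφA
      exact mod_cast hφA
  choose φ hφ hφd using hdB
  refine ⟨fun k => φ k, fun k => ⟨(φ k).contDiff, (φ k).hasCompactSupport, (φ k).tsupport_subset⟩,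
    ?_, fun ε hε => ?_⟩
  · refine tendsto_of_tendsto_of_tendsto_of_le_of_le tendsto_const_nhds ?_ (fun _ => zero_le) hφ
    simpa using (tendsto_add_atTop_iff_nat 1).2 ENNReal.tendsto_inv_nat_nhds_zero
  · obtain ⟨N, hN⟩ := EMetric.cauchySeq_iff.1 hd _ (ENNReal.ofReal_pos.2 hε)
    refine ⟨N, fun m l hm hl => ?_⟩
    rw [← edist_gradLp, hφd, hφd]
    exact hN m hm l hl

end BoundedApproximation

section Cutoff

open TopologicalSpace
open scoped Distributions ENNReal NNReal

theorem exists_testFunction_one_on_isCompact {E : Type*} [NormedAddCommGroup E] [NormedSpace ℝ E]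
    [FiniteDimensional ℝ E] {Ω : Opens E} {K : Set E} (hK : IsCompact K) (hKΩ : K ⊆ Ω) (n : ℕ∞) :
    ∃ θ : 𝓓^{n}(Ω, ℝ), (∀ x, θ x ∈ Set.Icc 0 1) ∧ ∀ x ∈ K, θ x = 1 := by
  obtain ⟨L, hL, hKL, hLΩ⟩ := exists_compact_between hK Ω.isOpen hKΩ
  obtain ⟨θ, hθK, hθL, hθ⟩ := exists_contMDiffMap_one_nhds_of_subset_interior
    (modelWithCornersSelf ℝ E) (n := n) hK.isClosed hKL
  have htsupport : tsupport θ ⊆ L :=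
    closure_minimal (fun x hx => not_imp_comm.1 (hθL x) hx) hL.isClosed
  exact ⟨⟨θ, θ.contMDiff.contDiff, hL.of_isClosed_subset (isClosed_tsupport θ) htsupport,
    htsupport.trans hLΩ⟩, hθ, fun x hx => hθK.self_of_nhdsSet x hx⟩

theorem isCompact_inter_closure_inter_le_abs {X : Type*} [TopologicalSpace X] [T2Space X]
    {K ω : Set X} {u : X → ℝ} (hK : IsCompact K) (hu : ContinuousOn u K) (ε : ℝ) :
    IsCompact (K ∩ closure ω ∩ {x | ε ≤ |u x|}) := by
  have hKω : IsCompact (K ∩ closure ω) := hK.inter_right isClosed_closure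
  refine hKω.of_isClosed_subset ?_ Set.inter_subset_left
  exact (hu.mono Set.inter_subset_left).abs.preimage_isClosed_of_isClosed hKω.isClosed
    (isClosed_Ici (a := ε))

theorem exists_testFunction_oddTruncMin_eq_zero_of_ne_one {E : Type*} [NormedAddCommGroup E]
    [NormedSpace ℝ E] [FiniteDimensional ℝ E] {Ω ω : Opens E} {u : E → ℝ} (hu : ContinuousOn u Ω)
    (hfrontier : ∀ x ∈ (Ω : Set E) ∩ frontier ω, u x = 0) (φ : 𝓓^{1}(Ω, ℝ)) {ε : ℝ} (hε : 0 < ε) :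
    ∃ θ : 𝓓^{1}(ω, ℝ), (∀ x, θ x ∈ Set.Icc 0 1) ∧
      ∀ x ∈ ω, θ x ≠ 1 → oddTruncMin ε (u x) (φ x) = 0 := by
  obtain ⟨θ, hθ, hθone⟩ := exists_testFunction_one_on_isCompact (Ω := ω)
    (isCompact_inter_closure_inter_le_abs (ω := ω) φ.hasCompactSupport
      (hu.mono φ.tsupport_subset) ε) (fun x ⟨⟨hxφ, hxω⟩, hux⟩ => by
        by_contra hx
        have hux_zero := hfrontier x ⟨φ.tsupport_subset hxφ, hxω, fun h => hx (interior_subset h)⟩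
        rw [Set.mem_ofPred_eq, hux_zero, abs_zero] at hux
        exact hux.not_gt hε) 1
  refine ⟨θ, hθ, fun x hxω hx => oddTruncMin_of_min_le hε.le ?_⟩
  by_cases hxφ : x ∈ tsupport φ
  · exact min_le_of_left_le (not_le.1 fun hux => hx (hθone x ⟨⟨hxφ, subset_closure hxω⟩, hux⟩)).le
  · exact min_le_of_right_le (by simpa [image_eq_zero_of_notMem_tsupport hxφ] using hε.le)

theorem norm_fderiv_mul_le_of_mem_Icc {E : Type*} [NormedAddCommGroup E] [NormedSpace ℝ E]
    {θ h : E → ℝ} {x : E} {M a : ℝ} (hθ : DifferentiableAt ℝ θ x) (hh : DifferentiableAt ℝ h x)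
    (hθI : ∀ y, θ y ∈ Set.Icc 0 1) (hM : ‖fderiv ℝ θ x‖ ≤ M) (ha : 0 ≤ a)
    (hha : θ x ≠ 0 → θ x ≠ 1 → |h x| ≤ a) :
    ‖fderiv ℝ (fun y => θ y * h y) x‖ ≤ ‖fderiv ℝ h x‖ + M * a := by
  have hterm : |h x| * ‖fderiv ℝ θ x‖ ≤ M * a := by
    have hM_nonneg : 0 ≤ M := (norm_nonneg _).trans hM
    have hflat : fderiv ℝ θ x = 0 → |h x| * ‖fderiv ℝ θ x‖ ≤ M * a := fun h0 => by
      rw [h0, norm_zero, mul_zero]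
      positivity
    by_cases hzero : θ x = 0
    · exact hflat (IsLocalMin.fderiv_eq_zero (.of_forall fun y => hzero.trans_le (hθI y).1))
    by_cases hone : θ x = 1
    · exact hflat (IsLocalMax.fderiv_eq_zero (.of_forall fun y => (hθI y).2.trans_eq hone.symm))
    rw [mul_comm]
    gcongr
    exact hha hzero hone
  have hθx : |θ x| ≤ 1 := abs_le.2 ⟨by linarith [(hθI x).1], (hθI x).2⟩
  rw [fderiv_fun_mul hθ hh]
  calc ‖θ x • fderiv ℝ h x + h x • fderiv ℝ θ x‖
      ≤ |θ x| * ‖fderiv ℝ h x‖ + |h x| * ‖fderiv ℝ θ x‖ := by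
        grw [norm_add_le, norm_smul, norm_smul, Real.norm_eq_abs, Real.norm_eq_abs]
    _ ≤ ‖fderiv ℝ h x‖ + M * a := by
        grw [hterm, hθx, one_mul]

theorem eLpNorm_le_of_norm_le_add_three {α F : Type*} [MeasurableSpace α] {μ : Measure α}
    [NormedAddCommGroup F] {F₁ F₂ F₃ : Type*} [NormedAddCommGroup F₁] [NormedAddCommGroup F₂]
    [NormedAddCommGroup F₃] {p : ℝ≥0∞} (hp : 1 ≤ p) {g : α → F} {g₁ : α → F₁} {g₂ : α → F₂}
    {g₃ : α → F₃} (hg₁ : AEStronglyMeasurable g₁ μ) (hg₂ : AEStronglyMeasurable g₂ μ)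
    (hg₃ : AEStronglyMeasurable g₃ μ) {c₁ c₂ c₃ : ℝ≥0}
    (hg : ∀ x, ‖g x‖ ≤ c₁ * ‖g₁ x‖ + c₂ * ‖g₂ x‖ + c₃ * ‖g₃ x‖) :
    eLpNorm g p μ ≤ c₁ * eLpNorm g₁ p μ + c₂ * eLpNorm g₂ p μ + c₃ * eLpNorm g₃ p μ := by
  have hm₁ := hg₁.norm.const_smul (c₁ : ℝ)
  have hm₂ := hg₂.norm.const_smul (c₂ : ℝ)
  have hm₃ := hg₃.norm.const_smul (c₃ : ℝ)
  calc eLpNorm g p μ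
      ≤ eLpNorm (((c₁ : ℝ) • fun x => ‖g₁ x‖) + ((c₂ : ℝ) • fun x => ‖g₂ x‖) +
          (c₃ : ℝ) • fun x => ‖g₃ x‖) p μ := eLpNorm_mono_real hg
    _ ≤ eLpNorm ((c₁ : ℝ) • fun x => ‖g₁ x‖) p μ + eLpNorm ((c₂ : ℝ) • fun x => ‖g₂ x‖) p μ +
          eLpNorm ((c₃ : ℝ) • fun x => ‖g₃ x‖) p μ := by
        grw [eLpNorm_add_le (hm₁.add hm₂) hm₃ hp, eLpNorm_add_le hm₁ hm₂ hp]
    _ = _ := by simp [eLpNorm_const_smul]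

theorem abs_oddTruncMin_sub_mul_le {ε a a' b t : ℝ} (ht : t ∈ Set.Icc 0 1)
    (hab : t ≠ 1 → oddTruncMin ε a b = 0) :
    |oddTruncMin ε a b - t * oddTruncMin ε a' b| ≤ 4 * |a - a'| := by
  have hlip := abs_oddTruncMin_sub_le ε a a' b
  rcases eq_or_ne t 1 with rfl | ht1
  · rwa [one_mul]
  · rw [hab ht1, zero_sub, abs_neg] at hlip ⊢
    refine le_trans ?_ hlip
    rw [abs_mul, abs_of_nonneg ht.1]
    exact mul_le_of_le_one_left (abs_nonneg _) ht.2

variable {E : Type*} [NormedAddCommGroup E] [NormedSpace ℝ E] {Ω ω : Opens E}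

theorem aestronglyMeasurable_indicator_sub_testFunction [MeasurableSpace E] [BorelSpace E]
    {μ : Measure E} {u : E → ℝ} (hu : AEStronglyMeasurable ((ω : Set E).indicator u) μ)
    (φ : 𝓓^{1}(Ω, ℝ)) : AEStronglyMeasurable ((ω : Set E).indicator (u - ⇑φ)) μ := by
  rw [Set.indicator_sub']
  exact hu.sub (φ.aestronglyMeasurable.indicator ω.isOpen.measurableSet)

variable {ε : ℝ}

/-- The localisation to `ω` of the truncation of `f` by `φ`, by means of the cutoff `θ`. -/
noncomputable def cutoffTrunc (hε : 0 < ε) (θ : 𝓓^{1}(ω, ℝ)) (f φ : 𝓓^{1}(Ω, ℝ)) :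
    𝓓^{1}(ω, ℝ) where
  toFun x := θ x * oddTruncMin ε (f x) (φ x)
  contDiff' := θ.contDiff.mul (contDiff_oddTruncMin hε f.contDiff φ.contDiff)
  hasCompactSupport' := θ.hasCompactSupport.mul_right
  tsupport_subset' := (tsupport_mul_subset_left (f := θ)).trans θ.tsupport_subset

variable {θ : 𝓓^{1}(ω, ℝ)} {f φ : 𝓓^{1}(Ω, ℝ)} {u : E → ℝ} (hε : 0 < ε)
  (hθI : ∀ x, θ x ∈ Set.Icc 0 1)
  (hθ : ∀ x ∈ ω, θ x ≠ 1 → oddTruncMin ε (u x) (φ x) = 0)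

include hθI hθ

theorem abs_indicator_sub_cutoffTrunc_le (x : E) :
    |(ω : Set E).indicator u x - cutoffTrunc hε θ f φ x| ≤
      |(ω : Set E).indicator (u - ⇑φ) x| + 3 * |(tsupport φ).indicator (fun _ => ε) x| +
        4 * |(ω : Set E).indicator (u - ⇑f) x| := by
  change |_ - θ x * oddTruncMin ε (f x) (φ x)| ≤ _
  by_cases hx : x ∈ ω
  · have htrunc : |u x - oddTruncMin ε (u x) (φ x)| ≤
        |u x - φ x| + 3 * |(tsupport φ).indicator (fun _ => ε) x| := by
      by_cases hxφ : x ∈ tsupport φ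
      · rw [Set.indicator_of_mem hxφ, abs_of_pos hε]
        exact abs_sub_oddTruncMin_le hε.le _ _
      · have hφx : φ x = 0 := image_eq_zero_of_notMem_tsupport hxφ
        rw [oddTruncMin_of_min_le hε.le (min_le_of_right_le (by simpa [hφx] using hε.le)), hφx]
        simp
    simp only [Set.indicator_of_mem (SetLike.mem_coe.2 hx), Pi.sub_apply]
    linarith [abs_sub_le (u x) (oddTruncMin ε (u x) (φ x)) (θ x * oddTruncMin ε (f x) (φ x)),
      abs_oddTruncMin_sub_mul_le (a' := f x) (hθI x) (hθ x hx)]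
  · have hθx : θ x = 0 :=
      image_eq_zero_of_notMem_tsupport fun h => hx (θ.tsupport_subset h)
    rw [Set.indicator_of_notMem hx, hθx, zero_mul, sub_zero, abs_zero]
    positivity

theorem norm_fderiv_cutoffTrunc_le {M : ℝ≥0} (hM : LipschitzWith M θ) (x : E) :
    ‖fderiv ℝ (cutoffTrunc hε θ f φ) x‖ ≤ 4 * ‖fderiv ℝ f x‖ + 2 * ‖fderiv ℝ φ x‖ +
      M * 4 * |(ω : Set E).indicator (u - ⇑f) x| := by
  have hprod := norm_fderiv_mul_le_of_mem_Icc (differentiable_testFunction θ x)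
    ((contDiff_oddTruncMin hε f.contDiff φ.contDiff).differentiable one_ne_zero x) hθI
    (norm_fderiv_le_of_lipschitz ℝ hM) (a := 4 * |(ω : Set E).indicator (u - ⇑f) x|)
    (by positivity) fun hx0 hx1 => by
      have hxω : x ∈ ω := θ.tsupport_subset (subset_tsupport _ hx0)
      simpa [hθ x hxω hx1, hxω] using abs_oddTruncMin_sub_le ε (u x) (f x) (φ x)
  rw [← mul_assoc] at hprod
  refine hprod.trans ?_
  gcongr
  exact norm_fderiv_oddTruncMin_le hε (differentiable_testFunction f x)
    (differentiable_testFunction φ x)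

variable [MeasurableSpace E] [BorelSpace E] {μ : Measure E} {p : ℝ≥0∞} (hp : 1 ≤ p)

include hp

theorem eLpNorm_indicator_sub_cutoffTrunc_le
    (hu : AEStronglyMeasurable ((ω : Set E).indicator u) μ) :
    eLpNorm ((ω : Set E).indicator u - ⇑(cutoffTrunc hε θ f φ)) p μ ≤
      eLpNorm (u - ⇑φ) p μ + 3 * (‖ε‖ₑ * μ (tsupport φ) ^ (1 / p.toReal)) +
        4 * eLpNorm (u - ⇑f) p μ := by
  have hconst : AEStronglyMeasurable ((tsupport φ).indicator fun _ => ε) μ :=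
    aestronglyMeasurable_const.indicator (isClosed_tsupport φ).measurableSet
  have hnorm := eLpNorm_le_of_norm_le_add_three hp
    (aestronglyMeasurable_indicator_sub_testFunction hu φ) hconst
    (aestronglyMeasurable_indicator_sub_testFunction hu f)
    (c₁ := 1) (c₂ := 3) (c₃ := 4) (g := (ω : Set E).indicator u - ⇑(cutoffTrunc hε θ f φ))
    fun x => by simpa using abs_indicator_sub_cutoffTrunc_le (f := f) hε hθI hθ x
  simp only [ENNReal.coe_one, one_mul, ENNReal.coe_ofNat] at hnorm
  grw [hnorm, eLpNorm_indicator_const_le, eLpNorm_indicator_le, eLpNorm_indicator_le]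

theorem eLpNorm_fderiv_cutoffTrunc_le {M : ℝ≥0} (hM : LipschitzWith M θ)
    (hu : AEStronglyMeasurable ((ω : Set E).indicator u) μ) :
    eLpNorm (fderiv ℝ (cutoffTrunc hε θ f φ)) p μ ≤
      4 * eLpNorm (fderiv ℝ f) p μ + 2 * eLpNorm (fderiv ℝ φ) p μ +
        M * 4 * eLpNorm (u - ⇑f) p μ := by
  have hfderiv : ∀ g : 𝓓^{1}(Ω, ℝ), AEStronglyMeasurable (fderiv ℝ g) μ := fun g =>
    ((g.contDiff.continuous_fderiv one_ne_zero).stronglyMeasurable_of_hasCompactSupport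
      (g.hasCompactSupport.fderiv ℝ)).aestronglyMeasurable
  have hnorm := eLpNorm_le_of_norm_le_add_three hp (hfderiv f) (hfderiv φ)
    (aestronglyMeasurable_indicator_sub_testFunction hu f) (c₁ := 4) (c₂ := 2) (c₃ := M * 4)
    (g := fderiv ℝ (cutoffTrunc hε θ f φ))
    fun x => by simpa using norm_fderiv_cutoffTrunc_le hε hθI hθ hM x
  grw [hnorm, eLpNorm_indicator_le]
  simp

end Cutoff

section Localization

open TopologicalSpace
open scoped Distributions ENNReal NNReal

theorem exists_testFunction_approx_indicator {E : Type*} [NormedAddCommGroup E] [NormedSpace ℝ E]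
    [FiniteDimensional ℝ E] [MeasurableSpace E] [BorelSpace E] {μ : Measure E}
    [IsFiniteMeasureOnCompacts μ] {Ω ω : Opens E} {u : E → ℝ}
    (hu : AEStronglyMeasurable ((ω : Set E).indicator u) μ) (hcont : ContinuousOn u Ω)
    (hfrontier : ∀ x ∈ (Ω : Set E) ∩ frontier ω, u x = 0) {A : ℝ≥0}
    (happrox : ∀ δ : ℝ≥0∞, δ ≠ 0 → ∃ φ : 𝓓^{1}(Ω, ℝ),
      eLpNorm (u - ⇑φ) 2 μ ≤ δ ∧ eLpNorm (fderiv ℝ φ) 2 μ ≤ A) {δ : ℝ≥0∞} (hδ : δ ≠ 0) :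
    ∃ ψ : 𝓓^{1}(ω, ℝ), eLpNorm ((ω : Set E).indicator u - ⇑ψ) 2 μ ≤ δ ∧
      eLpNorm (fderiv ℝ ψ) 2 μ ≤ 6 * A + 1 := by
  have hδ3 : δ / 3 ≠ 0 := by simpa using hδ
  obtain ⟨φ, hφ, hφA⟩ := happrox (δ / 3) hδ3
  have hvol : 3 * μ (tsupport φ) ^ (1 / (2 : ℝ≥0∞).toReal) ≠ ⊤ := ENNReal.mul_ne_top (by simp)
    (ENNReal.rpow_ne_top_of_nonneg (by simp) φ.hasCompactSupport.measure_lt_top.ne)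
  obtain ⟨ε, hεpos, hεδ⟩ := ENNReal.exists_nnreal_pos_mul_lt hvol hδ3
  have hε : (0 : ℝ) < ε := NNReal.coe_pos.2 hεpos
  obtain ⟨θ, hθI, hθ⟩ := exists_testFunction_oddTruncMin_eq_zero_of_ne_one hcont hfrontier φ hε
  obtain ⟨M, hM⟩ := θ.contDiff.lipschitzWith_of_hasCompactSupport θ.hasCompactSupport one_ne_zero
  obtain ⟨η, hη, hηδ⟩ := ENNReal.exists_nnreal_pos_mul_lt (a := (1 + M) * 4) (b := min (δ / 3) 1)
    (by finiteness) (by simpa using hδ)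
  obtain ⟨f, hf, hfA⟩ := happrox η (by simpa using hη.ne')
  have hfsmall : 4 * eLpNorm (u - ⇑f) 2 μ + M * 4 * eLpNorm (u - ⇑f) 2 μ ≤ min (δ / 3) 1 := by
    rw [← add_mul, ← one_add_mul]
    grw [hf, mul_comm, hηδ]
  have hfδ := le_self_add.trans (hfsmall.trans (min_le_left _ _))
  have hfM := le_add_self.trans (hfsmall.trans (min_le_right _ _))
  refine ⟨cutoffTrunc hε θ f φ, ?_, ?_⟩
  · calc eLpNorm ((ω : Set E).indicator u - ⇑(cutoffTrunc hε θ f φ)) 2 μ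
        ≤ eLpNorm (u - ⇑φ) 2 μ + ε * (3 * μ (tsupport φ) ^ (1 / (2 : ℝ≥0∞).toReal)) +
            4 * eLpNorm (u - ⇑f) 2 μ := by
          refine (eLpNorm_indicator_sub_cutoffTrunc_le hε hθI hθ one_le_two hu).trans_eq ?_
          rw [Real.enorm_eq_ofReal hε.le, ENNReal.ofReal_coe_nnreal, mul_left_comm]
      _ ≤ δ / 3 + δ / 3 + δ / 3 := by gcongr
      _ = δ := ENNReal.add_thirds δ
  · calc eLpNorm (fderiv ℝ (cutoffTrunc hε θ f φ)) 2 μ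
        ≤ 4 * A + 2 * A + 1 := by
          grw [eLpNorm_fderiv_cutoffTrunc_le hε hθI hθ one_le_two hM hu, hfA, hφA, hfM]
      _ = 6 * A + 1 := by ring

end Localization

theorem restriction_to_nodal_domain_general {n : ℕ} {Ω ω : Set (EuclideanSpace ℝ (Fin n))}
    {u : EuclideanSpace ℝ (Fin n) → ℝ} (hΩ : IsOpen Ω) (hω : IsOpen ω) (hωΩ : ω ⊆ Ω)
    (hu : MemH10 Ω u) (hcont : ContinuousOn u Ω) (hfrontier : ∀ x ∈ Ω ∩ frontier ω, u x = 0) :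
    MemH10 ω (ω.indicator u) := by
  have hmeas : AEStronglyMeasurable (ω.indicator u) volume :=
    (aestronglyMeasurable_indicator_iff hω.measurableSet).2
      ((hcont.mono hωΩ).aestronglyMeasurable hω.measurableSet)
  lift Ω to TopologicalSpace.Opens (EuclideanSpace ℝ (Fin n)) using hΩ
  lift ω to TopologicalSpace.Opens (EuclideanSpace ℝ (Fin n)) using hω
  obtain ⟨A, hA⟩ := hu.exists_bounded_approx
  exact memH10_of_bounded_approx (A := 6 * A + 1) hmeas fun δ hδ => by
    simpa using exists_testFunction_approx_indicator hmeas hcont hfrontier hA hδ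

theorem restriction_to_nodal_domain {n : ℕ} (Ω : Set (EuclideanSpace ℝ (Fin n)))
    (hΩ : IsOpen Ω) (hvol : volume Ω < ⊤) (u : EuclideanSpace ℝ (Fin n) → ℝ)
    (hu : MemH10 Ω u) (hcont : ContinuousOn u Ω) (hzero : ∀ x ∉ Ω, u x = 0)
    (x₀ : EuclideanSpace ℝ (Fin n)) (hx₀ : x₀ ∈ Ω) (hux₀ : u x₀ ≠ 0)
    (ω : Set (EuclideanSpace ℝ (Fin n)))
    (hω : ω = connectedComponentIn {x ∈ Ω | u x ≠ 0} x₀) :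
    MemH10 ω (Set.indicator ω u) := by
  subst hω
  have hopen : IsOpen {x ∈ Ω | u x ≠ 0} := hcont.isOpen_inter_preimage hΩ isOpen_compl_singleton
  have hsub : connectedComponentIn {x ∈ Ω | u x ≠ 0} x₀ ⊆ Ω :=
    (connectedComponentIn_subset _ _).trans (Set.sep_subset _ _)
  refine restriction_to_nodal_domain_general hΩ hopen.connectedComponentIn hsub hu hcont
    fun x ⟨hxΩ, hxfrontier⟩ => by_contra fun hux => ?_
  exact Set.disjoint_left.1 (disjoint_frontier_connectedComponentIn hopen x₀) hxfrontier ⟨hxΩ, hux⟩
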